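/- Let X be a c-quasi-geodesic subgraph of a graph G for some c ∈ ℕ. Then for every graph-decomposition (H,(V_h)_{h ∈ V(H)}) of G, there exists an H-decomposition of X with radial width at most 3c times the radial width of (H,(V_h)). -/

import Mathlib

open SimpleGraph

namespace RadialPaper

variable {V W N : Type*}

/-- The ball of radius `r` around a set `U` of vertices of `G`. -/
def ballSet (G : SimpleGraph V) (U : Set V) (r : ℕ) : Set V :=
  {v | ∃ u ∈ U, G.edist u v ≤ (r : ℕ∞)}

/-- `G` has radius at most `r`: some vertex has distance at most `r` from every vertex.
The empty graph has radius `0`; a nonempty disconnected graph has radius `∞`, hence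
satisfies `radiusLE` for no `r`. -/
def radiusLE (G : SimpleGraph V) (r : ℕ) : Prop :=
  Nonempty V → ∃ v : V, ∀ w : V, G.edist v w ≤ (r : ℕ∞)

/-- `(Hg, B)` is a graph-decomposition of `G` modelled on `Hg`. -/
def IsGraphDecomp (G : SimpleGraph V) (Hg : SimpleGraph N) (B : N → Set V) : Prop :=
  (∀ v : V, ∃ h : N, v ∈ B h) ∧
  (∀ ⦃u v : V⦄, G.Adj u v → ∃ h : N, u ∈ B h ∧ v ∈ B h) ∧
  (∀ v : V, (Hg.induce {h : N | v ∈ B h}).Connected)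

/-- A subgraph `X` of `G` is `c`-quasi-geodesic. -/
def IsQuasiGeodesic (G : SimpleGraph V) (X : G.Subgraph) (c : ℕ) : Prop :=
  ∀ u v : X.verts, X.coe.edist u v ≤ (c : ℕ∞) * G.edist (u : V) (v : V)

/-- The subgraph `Y` of `G` is a `(≥ k)`-subdivision of the graph `X`. -/
def IsSubdivGE (k : ℕ) (X : SimpleGraph W) {G : SimpleGraph V} (Y : G.Subgraph) : Prop :=
  ∃ (f : W → V) (p : ∀ ⦃u v : W⦄, X.Adj u v → G.Walk (f u) (f v)),
    Function.Injective f ∧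
    (∀ ⦃u v : W⦄ (h : X.Adj u v), (p h).IsPath) ∧
    (∀ ⦃u v : W⦄ (h : X.Adj u v), k + 1 ≤ (p h).length) ∧
    (∀ ⦃u v : W⦄ (h : X.Adj u v), p h.symm = (p h).reverse) ∧
    (∀ ⦃u v : W⦄ (h : X.Adj u v) (w : W), f w ∈ (p h).support → w = u ∨ w = v) ∧
    (∀ ⦃u v u' v' : W⦄ (h : X.Adj u v) (h' : X.Adj u' v'), s(u, v) ≠ s(u', v') →
      ∀ x : V, x ∈ (p h).support → x ∈ (p h').support →
        (x = f u ∨ x = f v) ∧ (x = f u' ∨ x = f v')) ∧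
    Y.verts = Set.range f ∪ {x : V | ∃ (u v : W) (h : X.Adj u v), x ∈ (p h).support} ∧
    Y.edgeSet = {e : Sym2 V | ∃ (u v : W) (h : X.Adj u v), e ∈ (p h).edges}

/-- `G` contains a `(≥ k)`-subdivision of `X` as a `c`-quasi-geodesic subgraph. -/
def ContainsQuasiGeodesicSubdivGE (G : SimpleGraph V) (k : ℕ) (X : SimpleGraph W) (c : ℕ) :
    Prop :=
  ∃ Y : G.Subgraph, IsSubdivGE k X Y ∧ IsQuasiGeodesic G Y c

/-- `X` is a minor of `Hg`. -/
def IsMinorOf (X : SimpleGraph W) (Hg : SimpleGraph N) : Prop :=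
  ∃ B : W → Set N, (∀ w, (B w).Nonempty) ∧ (∀ w, (Hg.induce (B w)).Connected) ∧
    (∀ ⦃w w' : W⦄, w ≠ w' → Disjoint (B w) (B w')) ∧
    (∀ ⦃w w' : W⦄, X.Adj w w' → ∃ a ∈ B w, ∃ b ∈ B w', Hg.Adj a b)

/-- A class of (finite) graphs, given on the canonical vertex sets `Fin n`, is minor-closed. -/
def MinorClosed (ℋ : ∀ n : ℕ, SimpleGraph (Fin n) → Prop) : Prop :=
  ∀ ⦃m n : ℕ⦄ (X : SimpleGraph (Fin m)) (Hg : SimpleGraph (Fin n)),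
    ℋ n Hg → IsMinorOf X Hg → ℋ m X

/-- The triangle `K³`. -/
def triangleGraph : SimpleGraph (Fin 3) := ⊤

/-- The claw `K_{1,3}`, with centre `0`. -/
def clawGraph : SimpleGraph (Fin 4) := SimpleGraph.fromRel (fun a _ => a = 0)

/-- The wrench graph: two adjacent vertices `0, 1` of degree three, with leaves `2,3` and
`4,5` respectively. -/
def wrenchGraph : SimpleGraph (Fin 6) :=
  SimpleGraph.fromRel (fun a b =>
    (a = 0 ∧ b = 1) ∨ (a = 0 ∧ b = 2) ∨ (a = 0 ∧ b = 3) ∨ (a = 1 ∧ b = 4) ∨ (a = 1 ∧ b = 5))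

/-- The star `K_{1,m}`, with centre `none`. -/
def starGraph (m : ℕ) : SimpleGraph (Option (Fin m)) :=
  SimpleGraph.fromRel (fun a _ => a = none)

/-- `Hg` is a disjoint union of paths: every connected component is a path. -/
def IsUnionOfPaths (Hg : SimpleGraph N) : Prop :=
  ∀ cc : Hg.ConnectedComponent, ∃ m : ℕ,
    Nonempty (Hg.induce cc.supp ≃g SimpleGraph.pathGraph m)

/-- `Hg` is a disjoint union of cycles: every connected component is a cycle. -/
def IsUnionOfCycles (Hg : SimpleGraph N) : Prop :=
  ∀ cc : Hg.ConnectedComponent, ∃ m : ℕ, 3 ≤ m ∧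
    Nonempty (Hg.induce cc.supp ≃g SimpleGraph.cycleGraph m)

/-- `Hg` is a subdivided star, i.e. a `(≥ 0)`-subdivision of some star `K_{1,m}`. -/
def IsSubdividedStar (Hg : SimpleGraph N) : Prop :=
  ∃ m : ℕ, IsSubdivGE 0 (starGraph m) (⊤ : Hg.Subgraph)

/-- `Hg` is a disjoint union of subdivided stars. -/
def IsUnionOfSubdividedStars (Hg : SimpleGraph N) : Prop :=
  ∀ cc : Hg.ConnectedComponent, IsSubdividedStar (Hg.induce cc.supp)

/-- A graph-decomposition is honest: bags of adjacent nodes intersect. -/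
def Honest (Hg : SimpleGraph N) (B : N → Set V) : Prop :=
  ∀ ⦃h h' : N⦄, Hg.Adj h h' → (B h ∩ B h').Nonempty

/-- The outer-radial width of a decomposition of `G` is at most `r`. -/
def OuterRadialWidthLE (G : SimpleGraph V) (B : N → Set V) (r : ℕ) : Prop :=
  ∀ h : N, ∃ z : V, ∀ v ∈ B h, G.edist z v ≤ (r : ℕ∞)

/-- The radial spread of a decomposition `(Hg, B)` of a graph with vertex set `V`
is at most `r`. -/
def RadialSpreadLE (Hg : SimpleGraph N) (B : N → Set V) (r : ℕ) : Prop :=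
  ∀ v : V, radiusLE (Hg.induce {h : N | v ∈ B h}) r

/-- `φ` is an `(m, a, M, A, r)`-quasi-isometry from `Hg` to `G`. -/
def IsQuasiIsometry (Hg : SimpleGraph N) (G : SimpleGraph V) (m a M A r : ℕ)
    (φ : N → V) : Prop :=
  (∀ h h' : N, Hg.edist h h' ≤ (m : ℕ∞) * G.edist (φ h) (φ h') + (a : ℕ∞)) ∧
  (∀ h h' : N, G.edist (φ h) (φ h') ≤ (M : ℕ∞) * Hg.edist h h' + (A : ℕ∞)) ∧
  (∀ v : V, ∃ h : N, G.edist v (φ h) ≤ (r : ℕ∞))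

/-- `C` is a connected component of `G - S`: a maximal connected set of vertices
disjoint from `S`. -/
def IsCompOf (G : SimpleGraph V) (C S : Set V) : Prop :=
  C.Nonempty ∧ Disjoint C S ∧ (G.induce C).Connected ∧
  ∀ D : Set V, C ⊆ D → Disjoint D S → (G.induce D).Connected → D = C

/-- The subgraph `P` of `G` is an `M₀`–`M₁` path meeting `C`. -/
def IsM01Path (G : SimpleGraph V) (M₀ M₁ C : Set V) (P : G.Subgraph) : Prop :=
  ∃ (x y : V) (q : G.Walk x y), q.IsPath ∧ q.toSubgraph = P ∧ x ∈ M₀ ∧ y ∈ M₁ ∧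
    (∀ z ∈ q.support, z ≠ x → z ≠ y → z ∉ M₀ ∪ M₁) ∧ ∃ z ∈ q.support, z ∈ C

/-- The number of `M₀`–`M₁` paths meeting `C` that are contained in the subgraph `OS`. -/
noncomputable def Wcount (G : SimpleGraph V) (M₀ M₁ C : Set V) (OS : G.Subgraph) : ℕ :=
  Set.ncard {P : G.Subgraph | P ≤ OS ∧ IsM01Path G M₀ M₁ C P}

/-!
Let `d` bound the distances in `G` between vertices of a common bag. Give each node `h` the ball of
radius `⌊c * d / 2⌋` in `X` around the vertices of `X` lying in the bag of `h`. This is a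
decomposition because the nodes whose bag meets a connected set, here a ball of `X`, induce a
connected subgraph of the decomposition graph. Two vertices of `X` in the bag of `h` are joined in
`X` by a walk of length at most `c * d`, each of whose vertices is within `⌊c * d / 2⌋` of an end
and so lies in the new bag. Hence any vertex of `X` in the bag of `h` is a centre of the new bag,
which has radius at most `c * d + ⌊c * d / 2⌋`.
-/

section Distance

variable {V' : Type*} {G : SimpleGraph V} {G' : SimpleGraph V'}

lemma edist_le_natCast_iff_exists_walk {u v : V} {n : ℕ} :
    G.edist u v ≤ n ↔ ∃ p : G.Walk u v, p.length ≤ n := by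
  constructor
  · intro h
    obtain ⟨p, hp⟩ := exists_walk_of_edist_ne_top (ne_top_of_le_ne_top (ENat.natCast_ne_top n) h)
    exact ⟨p, by exact_mod_cast hp.trans_le h⟩
  · rintro ⟨p, hp⟩
    exact (edist_le p).trans (by exact_mod_cast hp)

lemma edist_map_le (f : G →g G') (u v : V) : G'.edist (f u) (f v) ≤ G.edist u v :=
  le_iInf fun p ↦ (edist_le (p.map f)).trans_eq (by rw [Walk.length_map])

lemma edist_induce_le_length {s : Set V} {u v : V} (p : G.Walk u v)
    (hp : ∀ w ∈ p.support, w ∈ s) :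
    (G.induce s).edist ⟨u, hp u p.start_mem_support⟩ ⟨v, hp v p.end_mem_support⟩ ≤ p.length := by
  have hlen : (p.induce s hp).length = p.length := by
    rw [← Walk.length_map (Embedding.induce s).toHom, Walk.map_induce]
    rfl
  exact hlen ▸ edist_le (p.induce s hp)

lemma radiusLE.edist_le {r : ℕ} (hG : radiusLE G r) (u v : V) : G.edist u v ≤ (2 * r : ℕ) := by
  obtain ⟨z, hz⟩ := hG ⟨u⟩
  calc G.edist u v ≤ G.edist u z + G.edist z v := G.edist_triangle
    _ ≤ r + r := add_le_add (G.edist_comm.trans_le (hz u)) (hz v)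
    _ = (2 * r : ℕ) := by rw [two_mul, Nat.cast_add]

end Distance

section Ball

variable {G : SimpleGraph V} {U : Set V}

lemma subset_ballSet (n : ℕ) : U ⊆ ballSet G U n :=
  fun u hu ↦ ⟨u, hu, by simp only [edist_self, zero_le]⟩

lemma mem_ballSet_of_mem_support {u v w : V} {n : ℕ} (hu : u ∈ U) (p : G.Walk u v)
    (hp : p.length ≤ n) (hw : w ∈ p.support) : w ∈ ballSet G U n := by
  classical
  exact ⟨u, hu, edist_le_natCast_iff_exists_walk.2
    ⟨p.takeUntil w hw, (p.length_takeUntil_le_length hw).trans hp⟩⟩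

lemma mem_ballSet_half_of_mem_support {u v w : V} {d : ℕ} (hu : u ∈ U) (hv : v ∈ U)
    (p : G.Walk u v) (hp : p.length ≤ d) (hw : w ∈ p.support) : w ∈ ballSet G U (d / 2) := by
  obtain ⟨q, r, rfl⟩ := Walk.mem_support_iff_exists_append.1 hw
  rw [Walk.length_append] at hp
  obtain hq | hr : q.length ≤ d / 2 ∨ r.length ≤ d / 2 := by omega
  · exact mem_ballSet_of_mem_support hu q hq q.end_mem_support
  · exact mem_ballSet_of_mem_support hv r.reverse (r.length_reverse.trans_le hr)
      r.reverse.end_mem_support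

lemma connected_induce_edist_le (G : SimpleGraph V) (v : V) (n : ℕ) :
    (G.induce {u | G.edist u v ≤ n}).Connected := by
  refine induce_connected_of_patches v (by simp only [Set.mem_ofPred_eq, edist_self, zero_le]) ?_
  intro u hu
  obtain ⟨p, hp⟩ := edist_le_natCast_iff_exists_walk.1 (G.edist_comm.trans_le hu)
  have hball : {w | w ∈ p.support} ⊆ {w | G.edist w v ≤ n} := by
    intro w hw
    obtain ⟨_, rfl, hvw⟩ := mem_ballSet_of_mem_support (Set.mem_singleton v) p hp hw
    exact G.edist_comm.trans_le hvw
  exact ⟨_, hball, p.start_mem_support, p.end_mem_support, p.connected_induce_support _ _⟩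

lemma radiusLE_induce_ballSet_half {d : ℕ} (hU : ∀ u ∈ U, ∀ v ∈ U, G.edist u v ≤ d) :
    radiusLE (G.induce (ballSet G U (d / 2))) (3 * d / 2) := by
  rintro ⟨⟨_, u, hu, -⟩⟩
  refine ⟨⟨u, subset_ballSet _ hu⟩, ?_⟩
  rintro ⟨w, v, hv, hvw⟩
  obtain ⟨p, hp⟩ := edist_le_natCast_iff_exists_walk.1 (hU u hu v hv)
  obtain ⟨q, hq⟩ := edist_le_natCast_iff_exists_walk.1 hvw
  have hpq : ∀ x ∈ (p.append q).support, x ∈ ballSet G U (d / 2) := by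
    intro x hx
    rcases (Walk.mem_support_append_iff p q).1 hx with hxp | hxq
    · exact mem_ballSet_half_of_mem_support hu hv p hp hxp
    · exact mem_ballSet_of_mem_support hv q hq hxq
  have hlen : (p.append q).length ≤ 3 * d / 2 := by
    rw [Walk.length_append]
    omega
  exact (edist_induce_le_length _ hpq).trans (by exact_mod_cast hlen)

end Ball

section Decomposition

variable {ι V' : Type*} {G : SimpleGraph V} {G' : SimpleGraph V'} {H : SimpleGraph N}
  {B : N → Set V}

lemma connected_induce_iUnion {K : SimpleGraph ι} (hK : K.Connected) {T : ι → Set N}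
    (hT : ∀ i, (H.induce (T i)).Connected) (hadj : ∀ ⦃i j⦄, K.Adj i j → (T i ∩ T j).Nonempty) :
    (H.induce (⋃ i, T i)).Connected := by
  have reachable_of_mem {i : ι} {a b : N} (ha : a ∈ T i) (hb : b ∈ T i) :
      (H.induce (⋃ i, T i)).Reachable ⟨a, Set.mem_iUnion_of_mem i ha⟩
        ⟨b, Set.mem_iUnion_of_mem i hb⟩ :=
    ((hT i).preconnected ⟨a, ha⟩ ⟨b, hb⟩).map (H.induceHomOfLE (Set.subset_iUnion T i)).toHom
  have reachable_of_walk {i j : ι} (p : K.Walk i j) {a b : N} (ha : a ∈ T i) (hb : b ∈ T j) :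
      (H.induce (⋃ i, T i)).Reachable ⟨a, Set.mem_iUnion_of_mem i ha⟩
        ⟨b, Set.mem_iUnion_of_mem j hb⟩ := by
    induction p generalizing a with
    | nil => exact reachable_of_mem ha hb
    | cons hij _ ih =>
      obtain ⟨x, hxi, hxj⟩ := hadj hij
      exact (reachable_of_mem ha hxi).trans (ih hxj hb)
  obtain ⟨i₀⟩ := hK.nonempty
  obtain ⟨a₀, ha₀⟩ := (hT i₀).nonempty
  refine connected_iff_exists_forall_reachable _ |>.2 ⟨⟨a₀, Set.mem_iUnion_of_mem i₀ ha₀⟩, ?_⟩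
  rintro ⟨b, hb⟩
  obtain ⟨j, hj⟩ := Set.mem_iUnion.1 hb
  obtain ⟨p⟩ := hK.preconnected i₀ j
  exact reachable_of_walk p ha₀ hj

lemma IsGraphDecomp.connected_induce_inter_nonempty (hB : IsGraphDecomp G H B) {C : Set V}
    (hC : (G.induce C).Connected) : (H.induce {h | (B h ∩ C).Nonempty}).Connected := by
  have hUnion : {h | (B h ∩ C).Nonempty} = ⋃ v : C, {h | (v : V) ∈ B h} := by
    ext h
    simp only [Set.Nonempty, Set.mem_inter_iff, Set.mem_ofPred_eq, Set.mem_iUnion, Subtype.exists,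
      exists_prop, and_comm]
  rw [hUnion]
  exact connected_induce_iUnion hC (fun v ↦ hB.2.2 v) fun _ _ huv ↦ hB.2.1 huv

lemma IsGraphDecomp.ballSet (hB : IsGraphDecomp G H B) (n : ℕ) :
    IsGraphDecomp G H fun h ↦ ballSet G (B h) n := by
  refine ⟨fun v ↦ ?_, fun u v huv ↦ ?_, fun v ↦ ?_⟩
  · obtain ⟨h, hv⟩ := hB.1 v
    exact ⟨h, subset_ballSet n hv⟩
  · obtain ⟨h, hu, hv⟩ := hB.2.1 huv
    exact ⟨h, subset_ballSet n hu, subset_ballSet n hv⟩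
  · exact hB.connected_induce_inter_nonempty (connected_induce_edist_le G v n)

lemma IsGraphDecomp.comap (hB : IsGraphDecomp G H B) (f : G' →g G) :
    IsGraphDecomp G' H fun h ↦ f ⁻¹' B h :=
  ⟨fun v ↦ hB.1 (f v), fun _ _ huv ↦ hB.2.1 (f.map_adj huv), fun v ↦ hB.2.2 (f v)⟩

end Decomposition

theorem quasi_geodesic_subgraph_decomposition_general
    {V N : Type*} (G : SimpleGraph V) (X : G.Subgraph) (c : ℕ)
    (hgeo : IsQuasiGeodesic G X c) (Hg : SimpleGraph N) (B : N → Set V)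
    (hdec : IsGraphDecomp G Hg B) (d : ℕ)
    (hd : ∀ h, ∀ u ∈ B h, ∀ v ∈ B h, G.edist u v ≤ d) :
    ∃ B' : N → Set X.verts, IsGraphDecomp X.coe Hg B' ∧
      ∀ h, radiusLE (X.coe.induce (B' h)) (3 * (c * d) / 2) := by
  refine ⟨fun h ↦ ballSet X.coe (X.hom ⁻¹' B h) (c * d / 2), (hdec.comap X.hom).ballSet _,
    fun h ↦ radiusLE_induce_ballSet_half fun u hu v hv ↦ ?_⟩
  calc X.coe.edist u v ≤ c * G.edist (u : V) v := hgeo u v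
    _ ≤ c * d := by gcongr; exact hd h u hu v hv
    _ = (c * d : ℕ) := (Nat.cast_mul c d).symm

/-- Let `X` be a `c`-quasi-geodesic subgraph of `G`. Then for every
graph-decomposition `(Hg, B)` of `G` (of radial width at most `r`), there is an
`Hg`-decomposition of `X` of radial width at most `3·c·r`. -/
theorem quasi_geodesic_subgraph_decomposition
    {V N : Type*} [Fintype V] [Fintype N] (G : SimpleGraph V) (X : G.Subgraph) (c : ℕ)
    (hgeo : IsQuasiGeodesic G X c) (Hg : SimpleGraph N) (B : N → Set V)
    (hdec : IsGraphDecomp G Hg B) (r : ℕ) (hw : ∀ h, radiusLE (G.induce (B h)) r) :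
    ∃ B' : N → Set X.verts, IsGraphDecomp X.coe Hg B' ∧
      ∀ h, radiusLE (X.coe.induce (B' h)) (3 * c * r) := by
  have hd (h : N) (u : V) (hu : u ∈ B h) (v : V) (hv : v ∈ B h) : G.edist u v ≤ (2 * r : ℕ) :=
    (edist_map_le (Embedding.induce (B h)).toHom _ _).trans ((hw h).edist_le ⟨u, hu⟩ ⟨v, hv⟩)
  have hr : 3 * (c * (2 * r)) / 2 = 3 * c * r := by
    rw [show 3 * (c * (2 * r)) = 3 * c * r * 2 by ring, Nat.mul_div_cancel _ two_pos]
  exact hr ▸ quasi_geodesic_subgraph_decomposition_general G X c hgeo Hg B hdec (2 * r) hd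

end RadialPaper
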